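/- arXiv:1705.05422 — 4 statements merged into one kernel-verified Lean document; each statement's English description precedes it below -/
import Mathlib

section
/- Let A be an invertible linear map of ℝ^d and let f : ℝ^d → ℝ^d be a homeomorphism such that sup_{x ∈ ℝ^d} ‖f(x) − A(x)‖ < ∞ and sup_{x ∈ ℝ^d} ‖f⁻¹(x) − A⁻¹(x)‖ < ∞. Then for each integer n ∈ ℤ and each real number C > 1 there exists M > 0 such that for all x, y ∈ ℝ^d with ‖x − y‖ > M one has 1/C < ‖fⁿ(x) − fⁿ(y)‖ / ‖Aⁿ(x) − Aⁿ(y)‖ < C. -/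
/-!
Closeness at bounded distance passes to compositions and inverses as long as the model maps are
Lipschitz, so `f ^ n` stays at bounded distance from `A ^ n`. Distances between images under the
two maps then differ by a bounded amount, whereas `dist ((A ^ n) x) ((A ^ n) y)` is at least a
constant multiple of `dist x y`; hence the ratio of the two distances tends to `1` as
`dist x y → ∞`.
-/

open Filter Topology Asymptotics
open scoped NNReal

section BoundedDistance

variable {X Y Z : Type*} [PseudoMetricSpace Y] [PseudoMetricSpace Z]

/-- Two maps into a metric space are *at bounded distance* if `dist (f x) (g x)` is bounded
uniformly in `x`. The bound is existential, so that no boundedness side condition on a supremum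
is needed. -/
def AtBoundedDistance (f g : X → Y) : Prop :=
  ∃ D : ℝ, ∀ x, dist (f x) (g x) ≤ D

namespace AtBoundedDistance

theorem refl (f : X → Y) : AtBoundedDistance f f :=
  ⟨0, fun x => (dist_self (f x)).le⟩

theorem comp {f g : Y → Z} {u v : X → Y} {K : ℝ≥0} (hfg : AtBoundedDistance f g)
    (hg : LipschitzWith K g) (huv : AtBoundedDistance u v) :
    AtBoundedDistance (f ∘ u) (g ∘ v) := by
  obtain ⟨D, hD⟩ := hfg
  obtain ⟨D', hD'⟩ := huv
  refine ⟨D + K * D', fun x => ?_⟩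
  calc dist (f (u x)) (g (v x))
      ≤ dist (f (u x)) (g (u x)) + dist (g (u x)) (g (v x)) := dist_triangle _ _ _
    _ ≤ D + K * D' := add_le_add (hD _) (hg.dist_le_mul_of_le (hD' x))

theorem iterate {f g : Y → Y} {K : ℝ≥0} (hfg : AtBoundedDistance f g) (hg : LipschitzWith K g)
    (n : ℕ) : AtBoundedDistance f^[n] g^[n] := by
  induction n with
  | zero => exact refl id
  | succ n ih => simpa only [Function.iterate_succ'] using hfg.comp hg ih

theorem equiv_symm {f g : Z ≃ Y} {K : ℝ≥0} (hfg : AtBoundedDistance f g)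
    (hg : LipschitzWith K g.symm) : AtBoundedDistance f.symm g.symm := by
  obtain ⟨D, hD⟩ := hfg
  refine ⟨K * D, fun y => ?_⟩
  have hy : dist (g (f.symm y)) y ≤ D := by
    simpa only [f.apply_symm_apply, dist_comm] using hD (f.symm y)
  simpa only [g.symm_apply_apply] using hg.dist_le_mul_of_le hy

theorem zpow {f g : Equiv.Perm Y} {K K' : ℝ≥0} (hfg : AtBoundedDistance f g)
    (hg : LipschitzWith K g) (hg' : LipschitzWith K' ⇑g⁻¹) (n : ℤ) :
    AtBoundedDistance ⇑(f ^ n) ⇑(g ^ n) := by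
  have hinv : AtBoundedDistance ⇑f⁻¹ ⇑g⁻¹ := hfg.equiv_symm hg'
  obtain ⟨m, rfl | rfl⟩ := n.eq_nat_or_neg
  · simpa only [zpow_natCast, Equiv.Perm.iterate_eq_pow] using hfg.iterate hg m
  · simpa only [zpow_neg, zpow_natCast, ← inv_pow, ← Equiv.Perm.iterate_eq_pow] using
      hinv.iterate hg' m

theorem isBigO_one_dist_sub_dist {f g : X → Y} (hfg : AtBoundedDistance f g)
    (l : Filter (X × X)) :
    (fun p => dist (f p.1) (f p.2) - dist (g p.1) (g p.2)) =O[l] (1 : X × X → ℝ) := by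
  obtain ⟨D, hD⟩ := hfg
  refine IsBigO.of_bound (D + D) (Eventually.of_forall fun p => ?_)
  calc ‖dist (f p.1) (f p.2) - dist (g p.1) (g p.2)‖
      ≤ dist (f p.1) (g p.1) + dist (f p.2) (g p.2) := dist_dist_dist_le _ _ _ _
    _ ≤ (D + D) * ‖(1 : X × X → ℝ) p‖ := by
      simpa using add_le_add (hD p.1) (hD p.2)

end AtBoundedDistance

end BoundedDistance

section LargeScale

variable {X Y : Type*} [PseudoMetricSpace X] [PseudoMetricSpace Y]

theorem tendsto_dist_atTop_of_antilipschitzWith {g : X → Y} {K : ℝ≥0}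
    (hg : AntilipschitzWith K g) :
    Tendsto (fun p : X × X => dist (g p.1) (g p.2))
      (comap (fun p => dist p.1 p.2) atTop) atTop := by
  have hK : (0 : ℝ) < K + 1 := by positivity
  have hle (p : X × X) : dist p.1 p.2 ≤ (K + 1) * dist (g p.1) (g p.2) :=
    (hg.le_mul_dist p.1 p.2).trans
      (mul_le_mul_of_nonneg_right (le_add_of_nonneg_right zero_le_one) dist_nonneg)
  exact (tendsto_const_mul_atTop_of_pos hK).1 (tendsto_atTop_mono hle tendsto_comap)

theorem AtBoundedDistance.isEquivalent_dist {f g : X → Y} {K : ℝ≥0}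
    (hfg : AtBoundedDistance f g) (hg : AntilipschitzWith K g) :
    (fun p : X × X => dist (f p.1) (f p.2)) ~[comap (fun p => dist p.1 p.2) atTop]
      fun p => dist (g p.1) (g p.2) :=
  (hfg.isBigO_one_dist_sub_dist _).trans_isLittleO <|
    (isLittleO_one_left_iff ℝ).2 <|
      tendsto_norm_atTop_atTop.comp (tendsto_dist_atTop_of_antilipschitzWith hg)

theorem AtBoundedDistance.tendsto_dist_div_dist {f g : X → Y} {K : ℝ≥0}
    (hfg : AtBoundedDistance f g) (hg : AntilipschitzWith K g) :
    Tendsto (fun p : X × X => dist (f p.1) (f p.2) / dist (g p.1) (g p.2))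
      (comap (fun p => dist p.1 p.2) atTop) (𝓝 1) :=
  (isEquivalent_iff_tendsto_one
    ((tendsto_dist_atTop_of_antilipschitzWith hg).eventually_ne_atTop 0)).1
    (hfg.isEquivalent_dist hg)

theorem exists_pos_forall_of_eventually_comap_dist_atTop {P : X × X → Prop}
    (h : ∀ᶠ p in comap (fun p : X × X => dist p.1 p.2) atTop, P p) :
    ∃ M > 0, ∀ x y, M < dist x y → P (x, y) := by
  obtain ⟨M, hM, hP⟩ := ((atTop_basis_Ioi' (0 : ℝ)).comap _).eventually_iff.1 h
  exact ⟨M, hM, fun x y hxy => hP hxy⟩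

theorem exists_lipschitzWith_zpow {g : Equiv.Perm X} {K K' : ℝ≥0} (hg : LipschitzWith K g)
    (hg' : LipschitzWith K' ⇑g⁻¹) (n : ℤ) : ∃ L : ℝ≥0, LipschitzWith L ⇑(g ^ n) := by
  obtain ⟨m, rfl | rfl⟩ := n.eq_nat_or_neg
  · exact ⟨K ^ m, by simpa only [zpow_natCast, Equiv.Perm.iterate_eq_pow] using hg.iterate m⟩
  · exact ⟨K' ^ m, by
      simpa only [zpow_neg, zpow_natCast, ← inv_pow, ← Equiv.Perm.iterate_eq_pow] using
        hg'.iterate m⟩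

theorem exists_antilipschitzWith_zpow {g : Equiv.Perm X} {K K' : ℝ≥0} (hg : LipschitzWith K g)
    (hg' : LipschitzWith K' ⇑g⁻¹) (n : ℤ) : ∃ L : ℝ≥0, AntilipschitzWith L ⇑(g ^ n) := by
  obtain ⟨L, hL⟩ := exists_lipschitzWith_zpow hg hg' (-n)
  rw [zpow_neg] at hL
  exact ⟨L, hL.to_rightInverse (g ^ n).symm_apply_apply⟩

end LargeScale

theorem continuousLinearEquiv_toEquiv_zpow {R E : Type*} [Semiring R] [AddCommMonoid E]
    [TopologicalSpace E] [Module R E] (A : E ≃L[R] E) (n : ℤ) :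
    (A ^ n).toEquiv = A.toEquiv ^ n :=
  map_zpow (MonoidHom.mk' (fun B : E ≃L[R] E => B.toEquiv) fun _ _ => rfl) A n

theorem iterate_dist_ratio_close_of_bounded_distance_general {X : Type*} [PseudoMetricSpace X]
    {A f : Equiv.Perm X} {K K' : ℝ≥0} (hA : LipschitzWith K A) (hA' : LipschitzWith K' ⇑A⁻¹)
    (hfA : AtBoundedDistance f A) (n : ℤ) {C : ℝ} (hC : 1 < C) :
    ∃ M > 0, ∀ x y : X, M < dist x y →
      1 / C < dist ((f ^ n) x) ((f ^ n) y) / dist ((A ^ n) x) ((A ^ n) y) ∧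
      dist ((f ^ n) x) ((f ^ n) y) / dist ((A ^ n) x) ((A ^ n) y) < C := by
  obtain ⟨L, hL⟩ := exists_antilipschitzWith_zpow hA hA' n
  have hratio := (hfA.zpow hA hA' n).tendsto_dist_div_dist hL
  have hC' : 1 / C < 1 := (div_lt_one (zero_lt_one.trans hC)).2 hC
  exact exists_pos_forall_of_eventually_comap_dist_atTop
    (hratio.eventually (Ioo_mem_nhds hC' hC))

/-- If `f` is a homeomorphism of `ℝ^d` at bounded uniform distance from an
invertible linear map `A` (and likewise for the inverses), then for every
`n : ℤ` and `C > 1` there is `M > 0` such that points at distance `> M` satisfy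
`1/C < ‖fⁿ x − fⁿ y‖ / ‖Aⁿ x − Aⁿ y‖ < C`. -/
theorem iterate_dist_ratio_close_of_bounded_distance {d : ℕ}
    (A : EuclideanSpace ℝ (Fin d) ≃L[ℝ] EuclideanSpace ℝ (Fin d))
    (f : EuclideanSpace ℝ (Fin d) ≃ₜ EuclideanSpace ℝ (Fin d))
    (hbd : ∃ K : ℝ, ∀ x, ‖f x - A x‖ ≤ K)
    (hbd' : ∃ K : ℝ, ∀ x, ‖f.symm x - A.symm x‖ ≤ K)
    (n : ℤ) (C : ℝ) (hC : 1 < C) :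
    ∃ M > 0, ∀ x y : EuclideanSpace ℝ (Fin d), M < ‖x - y‖ →
      1 / C < ‖(f.toEquiv ^ n) x - (f.toEquiv ^ n) y‖ / ‖(A ^ n) x - (A ^ n) y‖ ∧
      ‖(f.toEquiv ^ n) x - (f.toEquiv ^ n) y‖ / ‖(A ^ n) x - (A ^ n) y‖ < C := by
  simpa only [dist_eq_norm, ← continuousLinearEquiv_toEquiv_zpow] using!
    iterate_dist_ratio_close_of_bounded_distance_general (A := A.toEquiv) (f := f.toEquiv)
      A.lipschitz A.symm.lipschitz (by simpa only [← dist_eq_norm] using! hbd) n hC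
end

section
/- For every integer n ≥ 3, the polynomial p_n has a real root in the open interval (n, n+1). -/
/-- The polynomial function `p_a(t)` of the paper, with the index `a` taken in an arbitrary
commutative ring instead of `ℕ` so that its sign at `a` and `a + 1` can be studied for real `a`. -/
def pn {R : Type*} [CommRing R] (a t : R) : R :=
  t ^ 4 - (a + 4) * t ^ 3 + (4 * a + 3) * t ^ 2 - (3 * a + 2) * t + 1

section CommRing

variable {R : Type*} [CommRing R]

theorem pn_self (a : R) : pn a a = 1 - 2 * a := by
  unfold pn
  ring

theorem pn_add_one (a : R) : pn a (a + 1) = a ^ 3 - a ^ 2 - 4 * a - 1 := by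
  unfold pn
  ring

theorem continuous_pn [TopologicalSpace R] [IsTopologicalRing R] (a : R) :
    Continuous (pn a) := by
  unfold pn
  fun_prop

end CommRing

section OrderedRing

variable {R : Type*} [CommRing R] [LinearOrder R] [IsStrictOrderedRing R] {a : R}

theorem pn_self_neg (ha : 1 < 2 * a) : pn a a < 0 := by
  rw [pn_self]
  exact sub_neg_of_lt ha

theorem pn_add_one_pos (ha : 3 ≤ a) : 0 < pn a (a + 1) := by
  have hquad : 0 ≤ a ^ 2 + 2 * a + 2 := by linarith [sq_nonneg a]
  calc
    0 < (a - 3) * (a ^ 2 + 2 * a + 2) + 5 :=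
      add_pos_of_nonneg_of_pos (mul_nonneg (sub_nonneg.mpr ha) hquad) (by norm_num)
    _ = pn a (a + 1) := by
      rw [pn_add_one]
      ring

end OrderedRing

theorem pn_has_root_in_Ioo_n_general (a : ℝ) (ha : 3 ≤ a) :
    ∃ t ∈ Set.Ioo a (a + 1),
      t ^ 4 - (a + 4) * t ^ 3 + (4 * a + 3) * t ^ 2 - (3 * a + 2) * t + 1 = 0 :=
  intermediate_value_Ioo (lt_add_one a).le (continuous_pn a).continuousOn
    ⟨pn_self_neg (by linarith), pn_add_one_pos ha⟩

/-- For every `n ≥ 3`, the polynomial `p_n(t) = t⁴ − (n+4)t³ + (4n+3)t² − (3n+2)t + 1`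
has a real root in the open interval `(n, n+1)`. -/
theorem pn_has_root_in_Ioo_n (n : ℕ) (hn : 3 ≤ n) :
    ∃ t ∈ Set.Ioo (n : ℝ) ((n : ℝ) + 1),
      t ^ 4 - ((n : ℝ) + 4) * t ^ 3 + (4 * (n : ℝ) + 3) * t ^ 2
        - (3 * (n : ℝ) + 2) * t + 1 = 0 :=
  pn_has_root_in_Ioo_n_general n (by exact_mod_cast hn)
end

section
/- For every real number ε with 0 < ε < 1 there exists N such that for all natural numbers n ≥ N, the polynomial p_n has a real root in the open interval (1, 1+ε). -/
/-!
The parameter enters `p_a(t) = t⁴ − (a+4)t³ + (4a+3)t² − (3a+2)t + 1` affinely: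
`p_a(t) = (t⁴ − 4t³ + 3t² − 2t + 1) + a · t(t − 1)(3 − t)`. At `t = 1` the coefficient of `a`
vanishes and the value is `−1`, while on `(1, 3)` the coefficient is positive. Hence, at any fixed
point of `(1, 3)`, `p_a` becomes positive once `a` is large, and the intermediate value theorem
gives a root.
-/

open Filter Set

theorem eventually_exists_mem_Ioo_add_mul_eq_zero {X K : Type*}
    [ConditionallyCompleteLinearOrder X] [TopologicalSpace X] [OrderTopology X] [DenselyOrdered X]
    [Field K] [LinearOrder K] [IsStrictOrderedRing K] [TopologicalSpace K] [OrderTopology K]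
    {f g : X → K} {u v : X} (huv : u ≤ v)
    (hf : ContinuousOn f (Icc u v)) (hg : ContinuousOn g (Icc u v))
    (hfu : f u < 0) (hgu : g u ≤ 0) (hgv : 0 < g v) :
    ∀ᶠ a in atTop, ∃ t ∈ Ioo u v, f t + a * g t = 0 := by
  have hright : ∀ᶠ a in atTop, 0 < f v + a * g v :=
    (tendsto_atTop_add_const_left atTop (f v)
      (tendsto_id.atTop_mul_const hgv)).eventually_gt_atTop 0
  filter_upwards [hright, eventually_ge_atTop 0] with a hpos ha
  have hneg : f u + a * g u < 0 :=
    add_neg_of_neg_of_nonpos hfu (mul_nonpos_of_nonneg_of_nonpos ha hgu)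
  exact intermediate_value_Ioo huv (hf.add (continuousOn_const.mul hg)) ⟨hneg, hpos⟩

theorem pn_has_root_in_Ioo_one_general (ε : ℝ) (hε : 0 < ε) :
    ∀ᶠ a : ℝ in atTop, ∃ t ∈ Ioo (1 : ℝ) (1 + ε),
      t ^ 4 - (a + 4) * t ^ 3 + (4 * a + 3) * t ^ 2 - (3 * a + 2) * t + 1 = 0 := by
  -- The coefficient `t(t - 1)(3 - t)` is positive only up to `3`, so the interval is shortened.
  obtain ⟨δ, hδ, hδε, hδ1⟩ : ∃ δ : ℝ, 0 < δ ∧ δ ≤ ε ∧ δ ≤ 1 :=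
    ⟨min ε 1, lt_min hε one_pos, min_le_left .., min_le_right ..⟩
  have hcoeff : 0 < (1 + δ) * (1 + δ - 1) * (3 - (1 + δ)) :=
    mul_pos (mul_pos (by linarith) (by linarith)) (by linarith)
  have hroot : ∀ᶠ a : ℝ in atTop, ∃ t ∈ Ioo (1 : ℝ) (1 + δ),
      (t ^ 4 - 4 * t ^ 3 + 3 * t ^ 2 - 2 * t + 1) + a * (t * (t - 1) * (3 - t)) = 0 :=
    eventually_exists_mem_Ioo_add_mul_eq_zero (by linarith) (by fun_prop) (by fun_prop)
      (by norm_num) (by norm_num) hcoeff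
  filter_upwards [hroot] with a ⟨t, ht, hzero⟩
  exact ⟨t, Ioo_subset_Ioo_right (by linarith) ht, by linear_combination hzero⟩

/-- For every `0 < ε < 1`, for all large `n` the polynomial
`p_n(t) = t⁴ − (n+4)t³ + (4n+3)t² − (3n+2)t + 1` has a real root in `(1, 1+ε)`. -/
theorem pn_has_root_in_Ioo_one (ε : ℝ) (hε0 : 0 < ε) (hε1 : ε < 1) :
    ∃ N : ℕ, ∀ n : ℕ, N ≤ n →
      ∃ t ∈ Set.Ioo (1 : ℝ) (1 + ε),
        t ^ 4 - ((n : ℝ) + 4) * t ^ 3 + (4 * (n : ℝ) + 3) * t ^ 2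
          - (3 * (n : ℝ) + 2) * t + 1 = 0 := by
  exact eventually_atTop.1 <|
    tendsto_natCast_atTop_atTop.eventually (pn_has_root_in_Ioo_one_general ε hε0)
end

section
/- There exists N such that for every natural number n ≥ N the polynomial p_n has four distinct real roots β_n^s, β_{1,n}^c, β_{2,n}^c, β_n^u satisfying 0 < β_n^s < 1 < β_{1,n}^c < β_{2,n}^c < β_n^u and β_n^s · β_{1,n}^c · β_{2,n}^c · β_n^u = 1; moreover, as n → ∞, β_n^u / n → 1, β_{1,n}^c → 1, β_{2,n}^c → 3, and 3n · β_n^s → 1. -/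
open Filter Topology

/-!
The polynomial `p_ν = p_0 - ν q` is a singular perturbation of the cubic
`q = X ^ 3 - 4 X ^ 2 + 3 X = X (X - 1) (X - 3)`, since `-ν⁻¹ p_ν = q - ν⁻¹ p_0`. By the implicit
function theorem each simple root `c` of `q` continues to a root `x_ν` of `p_ν`, with
`ν (x_ν - c) → p_0(c) / q'(c)`. At `c = 0, 1` this limit is `1/3` and `1/2`: the first gives the
rate of the contracting root, and the signs put the two roots to the right of `0` and `1`. The
fourth root escapes to infinity; it is what the sum `ν + 4` of all roots leaves over.
-/

open Bornology Polynomial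

section Limits

variable {ι 𝕜 : Type*} [Field 𝕜] [LinearOrder 𝕜] [IsStrictOrderedRing 𝕜] [TopologicalSpace 𝕜]
  [OrderTopology 𝕜] {l : Filter ι} {k x : ι → 𝕜}

theorem eventually_lt_of_tendsto_mul_sub {c y : 𝕜} (hk : ∀ᶠ i in l, 0 < k i) (hy : 0 < y)
    (hx : Tendsto (fun i => k i * (x i - c)) l (𝓝 y)) : ∀ᶠ i in l, c < x i := by
  filter_upwards [hx.eventually_const_lt hy, hk] with i hi hki
  exact sub_pos.1 (pos_of_mul_pos_right hi hki.le)

theorem tendsto_add_div_self {y : 𝕜} (hk : Tendsto k l atTop) (hx : Tendsto x l (𝓝 y)) :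
    Tendsto (fun i => (k i + x i) / k i) l (𝓝 1) := by
  have hlim : Tendsto (fun i => 1 + x i / k i) l (𝓝 1) := by
    simpa using (hx.div_atTop hk).const_add 1
  refine hlim.congr' ?_
  filter_upwards [hk.eventually_ne_atTop 0] with i hi
  rw [add_div, div_self hi]

end Limits

section Perturbation

variable {𝕜 : Type*} [NontriviallyNormedField 𝕜] [CompleteSpace 𝕜]

theorem exists_hasDerivAt_implicit {F : 𝕜 × 𝕜 → 𝕜} {F' : 𝕜 × 𝕜 →L[𝕜] 𝕜} {x y a b : 𝕜}
    (hF : HasStrictFDerivAt F F' (x, y)) (hx : HasDerivAt (fun s => F (s, y)) a x)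
    (hy : HasDerivAt (fun t => F (x, t)) b y) (hb : b ≠ 0) :
    ∃ φ : 𝕜 → 𝕜, φ x = y ∧ HasDerivAt φ (-(a / b)) x ∧ ∀ᶠ s in 𝓝 x, F (s, φ s) = F (x, y) := by
  have ha' : F' (1, 0) = a :=
    (hF.hasFDerivAt.comp_hasDerivAt x ((hasDerivAt_id x).prodMk (hasDerivAt_const x y))).unique hx
  have hb' : F' (0, 1) = b :=
    (hF.hasFDerivAt.comp_hasDerivAt y ((hasDerivAt_const y x).prodMk (hasDerivAt_id y))).unique hy
  have hinv : F' ∘L .inr 𝕜 𝕜 𝕜 = ContinuousLinearEquiv.unitsEquivAut 𝕜 (Units.mk0 b hb) := by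
    ext; simp [hb']
  have hinv' : (F' ∘L .inr 𝕜 𝕜 𝕜).IsInvertible := ⟨_, hinv.symm⟩
  refine ⟨hF.implicitFunctionOfProdDomain hinv',
    (hF.eventually_apply_eq_iff_implicitFunctionOfProdDomain hinv').self_of_nhds.1 rfl,
    (hF.hasStrictFDerivAt_implicitFunctionOfProdDomain hinv').hasFDerivAt.hasDerivAt.congr_deriv ?_,
    hF.eventually_apply_implicitFunctionOfProdDomain hinv'⟩
  simp [hinv, ha', div_eq_mul_inv]

theorem exists_hasDerivAt_isRoot_add_C_mul (f q : 𝕜[X]) {c : 𝕜} (hc : q.IsRoot c)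
    (hc' : q.derivative.eval c ≠ 0) :
    ∃ φ : 𝕜 → 𝕜, φ 0 = c ∧ HasDerivAt φ (-(f.eval c / q.derivative.eval c)) 0 ∧
      ∀ᶠ ε in 𝓝 0, (q + C ε * f).IsRoot (φ ε) := by
  have hsnd (p : 𝕜[X]) : HasStrictFDerivAt (fun v : 𝕜 × 𝕜 => p.eval v.2)
      (p.derivative.eval c • .snd 𝕜 𝕜 𝕜) (0, c) :=
    HasStrictDerivAt.comp_hasStrictFDerivAt (f := Prod.snd) (0, c) (p.hasStrictDerivAt c)
      hasStrictFDerivAt_snd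
  obtain ⟨φ, hφ, hφ', hroot⟩ := exists_hasDerivAt_implicit
    ((hsnd q).add (hasStrictFDerivAt_fst.mul (hsnd f)))
    (by simpa using ((hasDerivAt_id (0 : 𝕜)).mul_const (f.eval c)).const_add (q.eval c))
    (by simpa using q.hasDerivAt c) hc'
  exact ⟨φ, hφ, hφ', hroot.mono fun ε hε => by simpa [hc.eq_zero] using hε⟩

theorem exists_isRoot_sub_C_mul_tendsto (f q : 𝕜[X]) {c : 𝕜} (hc : q.IsRoot c)
    (hc' : q.derivative.eval c ≠ 0) :
    ∃ x : 𝕜 → 𝕜, (∀ᶠ ν in cobounded 𝕜, (f - C ν * q).IsRoot (x ν)) ∧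
      Tendsto x (cobounded 𝕜) (𝓝 c) ∧
      Tendsto (fun ν => ν * (x ν - c)) (cobounded 𝕜) (𝓝 (f.eval c / q.derivative.eval c)) := by
  obtain ⟨φ, rfl, hφ', hroot⟩ := exists_hasDerivAt_isRoot_add_C_mul (-f) q hc hc'
  have hinv : Tendsto Inv.inv (cobounded 𝕜) (𝓝[≠] 0) := tendsto_inv₀_cobounded'
  have hinv' := hinv.mono_right nhdsWithin_le_nhds
  refine ⟨fun ν => φ ν⁻¹, ?_, hφ'.continuousAt.tendsto.comp hinv', ?_⟩
  · filter_upwards [hinv'.eventually hroot, eventually_ne_cobounded 0] with ν hν hν0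
    have hCν : C ν * C ν⁻¹ = (1 : 𝕜[X]) := by rw [← C_mul, mul_inv_cancel₀ hν0, C_1]
    have hfac : f - C ν * q = C (-ν) * (q + C ν⁻¹ * -f) := by
      rw [C_neg]
      linear_combination (-f) * hCν
    exact hfac ▸ root_mul_left_of_isRoot _ hν
  · simpa [Function.comp_def, neg_div] using hφ'.tendsto_slope_zero.comp hinv

end Perturbation

theorem eq_prod_X_sub_C_mul_X_sub_C {R : Type*} [CommRing R] [IsDomain R] {p : R[X]} {s : Finset R}
    (hp : IsMonicOfDegree p (s.card + 1)) (hs : ∀ x ∈ s, p.IsRoot x) :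
    p = (∏ x ∈ s, (X - C x)) * (X - C (-p.nextCoeff - ∑ x ∈ s, x)) := by
  obtain ⟨r, hr⟩ : ∏ x ∈ s, (X - C x) ∣ p :=
    (Multiset.prod_X_sub_C_dvd_iff_le_roots hp.ne_zero s.val).2 <|
      (Multiset.le_iff_subset s.nodup).2 fun x hx => (mem_roots hp.ne_zero).2 (hs x hx)
  have hprod : (∏ x ∈ s, (X - C x)).Monic := monic_prod_X_sub_C id s
  have hdeg : IsMonicOfDegree (∏ x ∈ s, (X - C x)) s.card := ⟨by simp, hprod⟩
  obtain ⟨d, rfl⟩ := isMonicOfDegree_one_iff.1 (hdeg.of_mul_left (hr ▸ hp))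
  have hd : p.nextCoeff = -∑ x ∈ s, x + d := by
    rw [hr, hprod.nextCoeff_mul (monic_X_add_C d), prod_X_sub_C_nextCoeff, nextCoeff_X_add_C]
  rw [hd, hr]
  simp

/-- The characteristic polynomial `p_ν` of `A_ν`. The parameter is real, so that its roots can be
followed continuously as `ν → ∞`. -/
noncomputable def anosovPoly (ν : ℝ) : ℝ[X] :=
  X ^ 4 - C (ν + 4) * X ^ 3 + C (4 * ν + 3) * X ^ 2 - C (3 * ν + 2) * X + 1

theorem anosovPoly_eq_sub_C_mul (ν : ℝ) :
    anosovPoly ν = anosovPoly 0 - C ν * (X ^ 3 - 4 * X ^ 2 + 3 * X) := by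
  simp only [anosovPoly, C_add, C_mul, C_0, C_ofNat]
  ring

theorem isMonicOfDegree_anosovPoly (ν : ℝ) : IsMonicOfDegree (anosovPoly ν) 4 := by
  rw [isMonicOfDegree_iff]
  unfold anosovPoly
  constructor <;> compute_degree!

theorem nextCoeff_anosovPoly (ν : ℝ) : (anosovPoly ν).nextCoeff = -(ν + 4) := by
  rw [nextCoeff_of_natDegree_pos (by simp [(isMonicOfDegree_anosovPoly ν).natDegree_eq]),
    (isMonicOfDegree_anosovPoly ν).natDegree_eq]
  simp [anosovPoly, -map_add, coeff_one, coeff_C_mul]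

theorem isRoot_anosovPoly_iff {ν t : ℝ} :
    (anosovPoly ν).IsRoot t ↔
      t ^ 4 - (ν + 4) * t ^ 3 + (4 * ν + 3) * t ^ 2 - (3 * ν + 2) * t + 1 = 0 := by
  simp [anosovPoly]

theorem anosovPoly_eq_prod_of_isRoot {ν s a b : ℝ} (hsa : s ≠ a) (hsb : s ≠ b) (hab : a ≠ b)
    (hs : (anosovPoly ν).IsRoot s) (ha : (anosovPoly ν).IsRoot a) (hb : (anosovPoly ν).IsRoot b) :
    anosovPoly ν = (X - C s) * (X - C a) * (X - C b) * (X - C (ν + (4 - s - a - b))) := by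
  have hmem : s ∉ ({a, b} : Finset ℝ) := by simp [hsa, hsb]
  have hdeg : IsMonicOfDegree (anosovPoly ν) (({s, a, b} : Finset ℝ).card + 1) := by
    rw [Finset.card_insert_of_notMem hmem, Finset.card_pair hab]
    exact isMonicOfDegree_anosovPoly ν
  have hprod := eq_prod_X_sub_C_mul_X_sub_C hdeg (by simpa using ⟨hs, ha, hb⟩)
  rw [Finset.prod_insert hmem, Finset.sum_insert hmem, Finset.prod_pair hab,
    Finset.sum_pair hab, nextCoeff_anosovPoly] at hprod
  have hfourth : -(-(ν + 4)) - (s + (a + b)) = ν + (4 - s - a - b) := by ring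
  rwa [hfourth, ← mul_assoc] at hprod

theorem mul_eq_one_of_anosovPoly_eq_prod {ν s a b u : ℝ}
    (h : anosovPoly ν = (X - C s) * (X - C a) * (X - C b) * (X - C u)) : s * a * b * u = 1 := by
  have heval : 1 = (0 - s) * (0 - a) * (0 - b) * (0 - u) := by
    simpa [anosovPoly] using congrArg (eval 0) h
  linear_combination -heval

theorem exists_isRoot_anosovPoly_tendsto {c : ℝ} (hc : c ^ 3 - 4 * c ^ 2 + 3 * c = 0)
    (hc' : 3 * c ^ 2 - 8 * c + 3 ≠ 0) :
    ∃ x : ℝ → ℝ, (∀ᶠ ν in atTop, (anosovPoly ν).IsRoot (x ν)) ∧ Tendsto x atTop (𝓝 c) ∧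
      Tendsto (fun ν => ν * (x ν - c)) atTop
        (𝓝 ((c ^ 4 - 4 * c ^ 3 + 3 * c ^ 2 - 2 * c + 1) / (3 * c ^ 2 - 8 * c + 3))) := by
  have hderiv : (derivative (X ^ 3 - 4 * X ^ 2 + 3 * X : ℝ[X])).eval c = 3 * c ^ 2 - 8 * c + 3 := by
    simp only [derivative_add, derivative_sub, derivative_mul, derivative_X_pow, derivative_ofNat,
      derivative_X, eval_add, eval_sub, eval_mul, eval_pow, eval_X, eval_C, eval_ofNat, eval_zero,
      eval_one, Nat.cast_ofNat]
    ring
  have heval : (anosovPoly 0).eval c = c ^ 4 - 4 * c ^ 3 + 3 * c ^ 2 - 2 * c + 1 := by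
    simp [anosovPoly]
  obtain ⟨x, hroot, hlim, hslope⟩ := exists_isRoot_sub_C_mul_tendsto (anosovPoly 0)
    (X ^ 3 - 4 * X ^ 2 + 3 * X) (by simpa using hc) (hderiv ▸ hc')
  rw [hderiv, heval] at hslope
  have hcob : atTop ≤ cobounded ℝ := IsOrderBornology.atTop_le_cobounded
  exact ⟨x, (hroot.filter_mono hcob).mono fun ν hν => by rwa [anosovPoly_eq_sub_C_mul],
    hlim.mono_left hcob, hslope.mono_left hcob⟩

theorem pn_four_roots_asymptotics_general :
    ∃ s a b u : ℝ → ℝ,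
      (∀ᶠ ν : ℝ in atTop,
        (0 < s ν ∧ s ν < 1 ∧ 1 < a ν ∧ a ν < b ν ∧ b ν < u ν) ∧
        s ν * a ν * b ν * u ν = 1 ∧
        (∀ t ∈ ({s ν, a ν, b ν, u ν} : Set ℝ),
          t ^ 4 - (ν + 4) * t ^ 3 + (4 * ν + 3) * t ^ 2 - (3 * ν + 2) * t + 1 = 0)) ∧
      Tendsto (fun ν => u ν / ν) atTop (𝓝 1) ∧
      Tendsto a atTop (𝓝 1) ∧
      Tendsto b atTop (𝓝 3) ∧
      Tendsto (fun ν => 3 * ν * s ν) atTop (𝓝 1) := by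
  obtain ⟨s, hs, hs_lim, hs_slope⟩ := exists_isRoot_anosovPoly_tendsto (c := 0) (by norm_num)
    (by norm_num)
  obtain ⟨a, ha, ha_lim, ha_slope⟩ := exists_isRoot_anosovPoly_tendsto (c := 1) (by norm_num)
    (by norm_num)
  obtain ⟨b, hb, hb_lim, -⟩ := exists_isRoot_anosovPoly_tendsto (c := 3) (by norm_num)
    (by norm_num)
  have hs_pos : ∀ᶠ ν in atTop, 0 < s ν :=
    eventually_lt_of_tendsto_mul_sub (eventually_gt_atTop 0) (by norm_num) hs_slope
  have ha_gt : ∀ᶠ ν in atTop, 1 < a ν :=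
    eventually_lt_of_tendsto_mul_sub (eventually_gt_atTop 0) (by norm_num) ha_slope
  refine ⟨s, a, b, fun ν => ν + (4 - s ν - a ν - b ν), ?_, ?_, ha_lim, hb_lim, ?_⟩
  · filter_upwards [hs, ha, hb, hs_pos, hs_lim.eventually_lt_const one_pos, ha_gt,
      ha_lim.eventually_lt_const one_lt_two, hb_lim.eventually_const_lt (by norm_num : (2 : ℝ) < 3),
      hb_lim.eventually_lt_const (by norm_num : (3 : ℝ) < 4), eventually_gt_atTop 7]
      with ν hs ha hb hs0 hs1 ha1 ha2 hb2 hb4 hν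
    have hsa : s ν < a ν := hs1.trans ha1
    have hab : a ν < b ν := ha2.trans hb2
    have hprod := anosovPoly_eq_prod_of_isRoot hsa.ne (hsa.trans hab).ne hab.ne hs ha hb
    refine ⟨⟨hs0, hs1, ha1, hab, by linarith⟩,
      mul_eq_one_of_anosovPoly_eq_prod hprod, fun t ht => ?_⟩
    rw [← isRoot_anosovPoly_iff, hprod]
    simpa [sub_eq_zero, or_assoc] using ht
  · exact tendsto_add_div_self tendsto_id (((hs_lim.const_sub 4).sub ha_lim).sub hb_lim)
  · convert hs_slope.const_mul 3 using 2 <;> ring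

/-- For all large `n`, `p_n` has four distinct real roots
`0 < β_n^s < 1 < β_{1,n}^c < β_{2,n}^c < β_n^u` of product `1`, with
`β_n^u/n → 1`, `β_{1,n}^c → 1`, `β_{2,n}^c → 3` and `3n·β_n^s → 1`. -/
theorem pn_four_roots_asymptotics :
    ∃ N : ℕ, ∃ s a b u : ℕ → ℝ,
      (∀ n : ℕ, N ≤ n →
        (0 < s n ∧ s n < 1 ∧ 1 < a n ∧ a n < b n ∧ b n < u n) ∧
        s n * a n * b n * u n = 1 ∧
        (∀ t ∈ ({s n, a n, b n, u n} : Set ℝ),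
          t ^ 4 - ((n : ℝ) + 4) * t ^ 3 + (4 * (n : ℝ) + 3) * t ^ 2
            - (3 * (n : ℝ) + 2) * t + 1 = 0)) ∧
      Tendsto (fun n : ℕ => u n / (n : ℝ)) atTop (𝓝 1) ∧
      Tendsto a atTop (𝓝 1) ∧
      Tendsto b atTop (𝓝 3) ∧
      Tendsto (fun n : ℕ => 3 * (n : ℝ) * s n) atTop (𝓝 1) := by
  have hcast : Tendsto (Nat.cast : ℕ → ℝ) atTop atTop := tendsto_natCast_atTop_atTop
  obtain ⟨s, a, b, u, hroots, hu, ha, hb, hs⟩ := pn_four_roots_asymptotics_general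
  obtain ⟨N, hN⟩ := eventually_atTop.1 (hcast.eventually hroots)
  exact ⟨N, s ∘ (↑), a ∘ (↑), b ∘ (↑), u ∘ (↑), hN, hu.comp hcast, ha.comp hcast, hb.comp hcast,
    hs.comp hcast⟩
end
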